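/- Let (X,T) be a topological dynamical system with compatible metric d, and let F be a candidate function such that mdim_M^-(T,X,d) = sup_{μ∈M(X,T)} liminf_{ε→0} F(μ,ε)/log(1/ε), and suppose that for every fixed ε>0 the map μ ↦ F(μ,ε) is concave on M(X,T). If mdim_M^-(T,X,d) = ∞, then M^-_max(T,X,d) is nonempty; more precisely, choosing μ_n ∈ M(X,T) with liminf_{ε→0} F(μ_n,ε)/log(1/ε) > 2^n for each n, the measure μ = Σ_{n=1}^∞ 2^{−n} μ_n satisfies liminf_{ε→0} F(μ,ε)/log(1/ε) = ∞. -/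

import Mathlib

open Filter MeasureTheory Set
open scoped ENNReal Topology

noncomputable section

namespace MMD

variable {X : Type*}

/-- The `n`-th Bowen metric `d_n(x,y) = max_{0 ≤ j ≤ n-1} d(T^j x, T^j y)`. -/
noncomputable def bowenDist [PseudoMetricSpace X] (T : X → X) (n : ℕ) (x y : X) : ℝ :=
  ⨆ j : Fin n, dist (T^[(j : ℕ)] x) (T^[(j : ℕ)] y)

/-- `r_n(T,d,ε,Z)`: minimal cardinality of an `(n,ε)`-spanning set of `Z`. -/
noncomputable def spanNum [PseudoMetricSpace X] (T : X → X) (n : ℕ) (ε : ℝ) (Z : Set X) : ℕ :=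
  sInf {k | ∃ E : Finset X, E.card = k ∧ ∀ z ∈ Z, ∃ y ∈ E, bowenDist T n z y < ε}

/-- `s_n(T,d,ε,Z)`: maximal cardinality of an `(n,ε)`-separated subset of `Z`. -/
noncomputable def sepNum [PseudoMetricSpace X] (T : X → X) (n : ℕ) (ε : ℝ) (Z : Set X) : ℕ :=
  sSup {k | ∃ F : Finset X, ↑F ⊆ Z ∧ F.card = k ∧
    ∀ x ∈ F, ∀ y ∈ F, x ≠ y → ε ≤ bowenDist T n x y}

/-- `limsup_{n→∞} (1/n) log r_n(T,d,ε,X)`. -/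
noncomputable def spanGrowth [PseudoMetricSpace X] (T : X → X) (ε : ℝ) : ℝ≥0∞ :=
  Filter.limsup (fun n : ℕ => ENNReal.ofReal (Real.log (spanNum T n ε Set.univ)) / (n : ℝ≥0∞))
    Filter.atTop

/-- Upper metric mean dimension. -/
noncomputable def mdimMUpper [PseudoMetricSpace X] (T : X → X) : ℝ≥0∞ :=
  Filter.limsup (fun ε : ℝ => spanGrowth T ε / ENNReal.ofReal (Real.log (1 / ε)))
    (nhdsWithin 0 (Set.Ioi 0))

/-- Lower metric mean dimension. -/
noncomputable def mdimMLower [PseudoMetricSpace X] (T : X → X) : ℝ≥0∞ :=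
  Filter.liminf (fun ε : ℝ => spanGrowth T ε / ENNReal.ofReal (Real.log (1 / ε)))
    (nhdsWithin 0 (Set.Ioi 0))

/-- A finite (Borel) partition given as a finite set of measurable, pairwise disjoint sets
covering the space. -/
def IsFinPartition {Y : Type*} [MeasurableSpace Y] (P : Finset (Set Y)) : Prop :=
  (∀ s ∈ P, MeasurableSet s) ∧ (∀ s ∈ P, ∀ t ∈ P, s ≠ t → Disjoint s t) ∧
    ⋃₀ (P : Set (Set Y)) = Set.univ

/-- Mutual information `I(ξ;η)` of two random variables, as the supremum over finite
measurable partitions of the target spaces. -/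
noncomputable def mutualInfo {Ω A B : Type*} [MeasurableSpace Ω] [MeasurableSpace A]
    [MeasurableSpace B] (P : Measure Ω) (ξ : Ω → A) (η : Ω → B) : ℝ≥0∞ :=
  ⨆ (p : Finset (Set A)) (_ : IsFinPartition p) (q : Finset (Set B)) (_ : IsFinPartition q),
    ENNReal.ofReal (∑ s ∈ p, ∑ t ∈ q,
      (P (ξ ⁻¹' s ∩ η ⁻¹' t)).toReal *
        Real.log ((P (ξ ⁻¹' s ∩ η ⁻¹' t)).toReal /
          ((P (ξ ⁻¹' s)).toReal * (P (η ⁻¹' t)).toReal)))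

/-- The `L^∞` rate distortion function `R_{μ,L∞}(ε,s)`: the infimum of `I(ξ;η)/n` over all
`n ≥ 1` and all joint distributions `ν` of `(ξ, (η_0,…,η_{n-1}))` such that `ξ` has law `μ`,
the `η_k` take (almost surely) finitely many values, and
`E(#{0 ≤ k ≤ n-1 : d(T^k ξ, η_k) ≥ ε}) < s n`. -/
noncomputable def RDistLInftyS [PseudoMetricSpace X] [MeasurableSpace X] (T : X → X)
    (μ : Measure X) (ε s : ℝ) : ℝ≥0∞ :=
  ⨅ (n : ℕ) (_ : 0 < n) (ν : Measure (X × (Fin n → X))) (_ : IsProbabilityMeasure ν)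
    (_ : ν.map Prod.fst = μ) (_ : ∃ S : Finset X, ν {p | ∀ k, p.2 k ∈ S} = 1)
    (_ : ∫⁻ p, (Nat.card {k : Fin n // ε ≤ dist (T^[(k : ℕ)] p.1) (p.2 k)} : ℝ≥0∞) ∂ν
        < ENNReal.ofReal (s * n)),
    mutualInfo ν Prod.fst Prod.snd / (n : ℝ≥0∞)

/-- `R_{μ,L∞}(ε) = lim_{s→0} R_{μ,L∞}(ε,s)` (the limit equals the supremum over `s > 0`
by monotonicity). -/
noncomputable def RDistLInfty [PseudoMetricSpace X] [MeasurableSpace X] (T : X → X)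
    (μ : Measure X) (ε : ℝ) : ℝ≥0∞ :=
  ⨆ (s : ℝ) (_ : 0 < s), RDistLInftyS T μ ε s

/-- The `L¹` rate distortion function `R_{μ,1}(ε)`. -/
noncomputable def RDistL1 [PseudoMetricSpace X] [MeasurableSpace X] (T : X → X)
    (μ : Measure X) (ε : ℝ) : ℝ≥0∞ :=
  ⨅ (n : ℕ) (_ : 0 < n) (ν : Measure (X × (Fin n → X))) (_ : IsProbabilityMeasure ν)
    (_ : ν.map Prod.fst = μ) (_ : ∃ S : Finset X, ν {p | ∀ k, p.2 k ∈ S} = 1)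
    (_ : ∫⁻ p, ∑ k : Fin n, ENNReal.ofReal (dist (T^[(k : ℕ)] p.1) (p.2 k)) ∂ν
        < ENNReal.ofReal (ε * n)),
    mutualInfo ν Prod.fst Prod.snd / (n : ℝ≥0∞)

/-- `R^δ_μ(T,n,ε)`: minimal number of Bowen `(n,ε)`-balls whose union has `μ`-measure
greater than `1 - δ`. -/
noncomputable def katokNum [PseudoMetricSpace X] [MeasurableSpace X] (T : X → X)
    (μ : Measure X) (n : ℕ) (ε δ : ℝ) : ℕ :=
  sInf {k | ∃ E : Finset X, E.card = k ∧
    ENNReal.ofReal (1 - δ) < μ (⋃ x ∈ E, {y | bowenDist T n x y < ε})}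

/-- `h̄^K_μ(T,ε,δ)`. -/
noncomputable def katokUpperD [PseudoMetricSpace X] [MeasurableSpace X] (T : X → X)
    (μ : Measure X) (ε δ : ℝ) : ℝ≥0∞ :=
  Filter.limsup (fun n : ℕ => ENNReal.ofReal (Real.log (katokNum T μ n ε δ)) / (n : ℝ≥0∞))
    Filter.atTop

/-- `ḥ^K_μ(T,ε,δ)`. -/
noncomputable def katokLowerD [PseudoMetricSpace X] [MeasurableSpace X] (T : X → X)
    (μ : Measure X) (ε δ : ℝ) : ℝ≥0∞ :=
  Filter.liminf (fun n : ℕ => ENNReal.ofReal (Real.log (katokNum T μ n ε δ)) / (n : ℝ≥0∞))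
    Filter.atTop

/-- `h̄^K_μ(T,ε) = lim_{δ→0} h̄^K_μ(T,ε,δ)` (equal to the supremum over `δ ∈ (0,1)` by
monotonicity). -/
noncomputable def katokUpper [PseudoMetricSpace X] [MeasurableSpace X] (T : X → X)
    (μ : Measure X) (ε : ℝ) : ℝ≥0∞ :=
  ⨆ (δ : ℝ) (_ : δ ∈ Set.Ioo (0 : ℝ) 1), katokUpperD T μ ε δ

/-- `ḥ^K_μ(T,ε) = lim_{δ→0} ḥ^K_μ(T,ε,δ)`. -/
noncomputable def katokLower [PseudoMetricSpace X] [MeasurableSpace X] (T : X → X)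
    (μ : Measure X) (ε : ℝ) : ℝ≥0∞ :=
  ⨆ (δ : ℝ) (_ : δ ∈ Set.Ioo (0 : ℝ) 1), katokLowerD T μ ε δ

/-- The empirical measure `(1/n) Σ_{j=0}^{n-1} δ_{T^j x}`. -/
noncomputable def empMeas [MeasurableSpace X] (T : X → X) (n : ℕ) (x : X) : Measure X :=
  (n : ℝ≥0∞)⁻¹ • ∑ j ∈ Finset.range n, Measure.dirac (T^[j] x)

/-- Pfister–Sullivan entropy `PS_μ(T,d,ε)`: infimum over weak* open neighborhoods `F` of `μ`
of `limsup_n (1/n) log s_n(T,d,ε,X_{n,F})`, where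
`X_{n,F} = {x : (1/n) Σ_{j<n} δ_{T^j x} ∈ F}`. -/
noncomputable def PSent [MetricSpace X] [MeasurableSpace X] [OpensMeasurableSpace X]
    (T : X → X) (μ : ProbabilityMeasure X) (ε : ℝ) : ℝ≥0∞ :=
  ⨅ (F : Set (ProbabilityMeasure X)) (_ : IsOpen F) (_ : μ ∈ F),
    Filter.limsup (fun n : ℕ => ENNReal.ofReal (Real.log (sepNum T n ε
      {x : X | ∃ h : IsProbabilityMeasure (empMeas T n x),
        (⟨empMeas T n x, h⟩ : ProbabilityMeasure X) ∈ F})) / (n : ℝ≥0∞)) Filter.atTop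

/-- Partition entropy `H_μ(P) = Σ_{A∈P} -μ(A) log μ(A)`. -/
noncomputable def entP [MeasurableSpace X] (μ : Measure X) (P : Finset (Set X)) : ℝ≥0∞ :=
  ∑ A ∈ P, ENNReal.ofReal (-((μ A).toReal * Real.log ((μ A).toReal)))

/-- The join `P^n = ∨_{j=0}^{n-1} T^{-j} P`. -/
noncomputable def joinN (T : X → X) (P : Finset (Set X)) (n : ℕ) : Finset (Set X) :=
  letI : DecidableEq (Set X) := Classical.decEq _
  (Fintype.piFinset (fun _ : Fin n => P)).image (fun f => ⋂ j : Fin n, T^[(j : ℕ)] ⁻¹' f j)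

/-- `h_μ(T,P) = lim_n H_μ(P^n)/n` (the limit exists and equals the liminf). -/
noncomputable def entRate [MeasurableSpace X] (T : X → X) (μ : Measure X)
    (P : Finset (Set X)) : ℝ≥0∞ :=
  Filter.liminf (fun n : ℕ => entP μ (joinN T P n) / (n : ℝ≥0∞)) Filter.atTop

/-- `inf { h_μ(T,P) : P a finite Borel partition with diam P ≤ ε }`. -/
noncomputable def infEntRate [PseudoMetricSpace X] [MeasurableSpace X] (T : X → X)
    (μ : Measure X) (ε : ℝ) : ℝ≥0∞ :=
  ⨅ (P : Finset (Set X)) (_ : IsFinPartition P) (_ : ∀ s ∈ P, Metric.diam s ≤ ε),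
    entRate T μ P

/-- Kolmogorov–Sinai entropy `h_μ(T)`. -/
noncomputable def ksEntropy [MeasurableSpace X] (T : X → X) (μ : Measure X) : ℝ≥0∞ :=
  ⨆ (P : Finset (Set X)) (_ : IsFinPartition P), entRate T μ P

/-- A finite open cover. -/
def IsFinOpenCover [TopologicalSpace X] (α : Finset (Set X)) : Prop :=
  (∀ A ∈ α, IsOpen A) ∧ ⋃₀ (α : Set (Set X)) = Set.univ

/-- `ord(β) = max_x #{B ∈ β : x ∈ B} - 1`. -/
noncomputable def ordCover (β : Finset (Set X)) : ℕ :=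
  sSup {k | ∃ x : X, Nat.card {B : Set X // B ∈ β ∧ x ∈ B} = k} - 1

/-- `D(α) = min_{β ≻ α} ord(β)`, over finite open covers `β` refining `α`. -/
noncomputable def Dcover [TopologicalSpace X] (α : Finset (Set X)) : ℕ :=
  sInf {k | ∃ β : Finset (Set X), IsFinOpenCover β ∧ (∀ B ∈ β, ∃ A ∈ α, B ⊆ A) ∧
    ordCover β = k}

/-- Mean (topological) dimension `mdim(X,T) = sup_α lim_n D(α^n)/n`. -/
noncomputable def mdimTop [TopologicalSpace X] (T : X → X) : ℝ≥0∞ :=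
  ⨆ (α : Finset (Set X)) (_ : IsFinOpenCover α),
    Filter.liminf (fun n : ℕ => (Dcover (joinN T α n) : ℝ≥0∞) / (n : ℝ≥0∞)) Filter.atTop

/-- The marker property for a homeomorphism. -/
def MarkerProperty [TopologicalSpace X] (T : X ≃ₜ X) : Prop :=
  ∀ N : ℕ, 0 < N → ∃ U : Set X, IsOpen U ∧
    (∀ n : ℕ, 1 ≤ n → n ≤ N → U ∩ (⇑T)^[n] '' U = ∅) ∧
    ⋃ n : ℤ, ⇑(T.toEquiv ^ n) '' U = Set.univ

/-- Upper dimension `limsup_{ε→0} F(μ,ε)/log(1/ε)` associated with a candidate `F`. -/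
noncomputable def dimFUpper [MeasurableSpace X] (F : Measure X → ℝ → ℝ≥0∞)
    (μ : Measure X) : ℝ≥0∞ :=
  Filter.limsup (fun ε : ℝ => F μ ε / ENNReal.ofReal (Real.log (1 / ε)))
    (nhdsWithin 0 (Set.Ioi 0))

/-- Lower dimension `liminf_{ε→0} F(μ,ε)/log(1/ε)` associated with a candidate `F`. -/
noncomputable def dimFLower [MeasurableSpace X] (F : Measure X → ℝ → ℝ≥0∞)
    (μ : Measure X) : ℝ≥0∞ :=
  Filter.liminf (fun ε : ℝ => F μ ε / ENNReal.ofReal (Real.log (1 / ε)))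
    (nhdsWithin 0 (Set.Ioi 0))

/-- A candidate function: for each invariant probability measure `μ`, `F(μ,·)` is
non-decreasing as `ε` decreases, and `F(μ,ε) → h_μ(T)` as `ε → 0⁺`. -/
def IsCandidate [MeasurableSpace X] (T : X → X) (F : Measure X → ℝ → ℝ≥0∞) : Prop :=
  ∀ μ : Measure X, IsProbabilityMeasure μ → MeasurePreserving T μ μ →
    (∀ ε₁ ε₂ : ℝ, 0 < ε₁ → ε₁ ≤ ε₂ → F μ ε₂ ≤ F μ ε₁) ∧
    Filter.Tendsto (F μ) (nhdsWithin 0 (Set.Ioi 0)) (nhds (ksEntropy T μ))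

end MMD

open MMD

/-
The lower dimension inherits concavity from `F`, and does so for countable convex combinations:
since `F ≥ 0`, splitting off one term at a time and discarding the tail gives
`∑ wₙ F(μₙ, ε) ≤ F(∑ wₙ μₙ, ε)`, and Fatou's lemma for the counting measure carries this inequality
to the `liminf` as `ε → 0`. With `wₙ = 2⁻ⁿ` and `dim μₙ ≥ 2ⁿ` every term of the series is at
least `1`, so the series diverges.
-/

namespace MMD

lemma concaveOn_ennreal_of_ofReal {E β : Type*} [AddCommMonoid E] [SMul ℝ≥0∞ E]
    [AddCommMonoid β] [PartialOrder β] [SMul ℝ≥0∞ β] {S : Set E} {G : E → β}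
    (hS : Convex ℝ≥0∞ S)
    (hG : ∀ x ∈ S, ∀ y ∈ S, ∀ p : ℝ, 0 ≤ p → p ≤ 1 →
      ENNReal.ofReal p • G x + ENNReal.ofReal (1 - p) • G y
        ≤ G (ENNReal.ofReal p • x + ENNReal.ofReal (1 - p) • y)) :
    ConcaveOn ℝ≥0∞ S G := by
  refine ⟨hS, fun x hx y hy a b _ _ hab => ?_⟩
  have ha : a ≤ 1 := hab ▸ le_self_add
  have ha_top : a ≠ ∞ := ne_top_of_le_ne_top ENNReal.one_ne_top ha
  have hb : b = 1 - a := ENNReal.eq_sub_of_add_eq ha_top (by rwa [add_comm])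
  have h := hG x hx y hy a.toReal ENNReal.toReal_nonneg
    (ENNReal.toReal_le_of_le_ofReal zero_le_one (by simpa using ha))
  rwa [ENNReal.ofReal_sub _ ENNReal.toReal_nonneg, ENNReal.ofReal_one,
    ENNReal.ofReal_toReal ha_top, ← hb] at h

lemma tsum_liminf_le {ι κ : Type*} {l : Filter ι} [l.IsCountablyGenerated]
    (f : κ → ι → ℝ≥0∞) :
    ∑' k, liminf (f k) l ≤ liminf (fun i => ∑' k, f k i) l := by
  let _ : MeasurableSpace κ := ⊤
  simpa only [lintegral_count] using
    lintegral_liminf_le (μ := Measure.count) (f := fun i k => f k i) (u := l)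
      fun _ => measurable_from_top

lemma exists_tsum_eq_one_and_eq_tsum_mul {ι : Type*} [Nonempty ι] {u : ι → ℝ≥0∞}
    (hu : ∑' i, u i ≠ ∞) : ∃ v : ι → ℝ≥0∞, ∑' i, v i = 1 ∧ ∀ i, u i = (∑' j, u j) * v i := by
  classical
  rcases eq_or_ne (∑' i, u i) 0 with h0 | h0
  · obtain ⟨i₀⟩ := ‹Nonempty ι›
    exact ⟨Pi.single i₀ 1, tsum_pi_single i₀ 1, by simpa [h0] using ENNReal.tsum_eq_zero.mp h0⟩
  · refine ⟨fun i => (∑' j, u j)⁻¹ * u i, ?_, fun i => ?_⟩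
    · rw [ENNReal.tsum_mul_left, ENNReal.inv_mul_cancel h0 hu]
    · rw [ENNReal.mul_inv_cancel_left h0 hu]

section SigmaConvex

variable {X : Type*} [MeasurableSpace X]

/-- A set of measures is `σ`-convex if it is closed under countable convex combinations
`∑ wₙ μₙ`. The weights are extended nonnegative reals, the scalars that act on measures. -/
def SigmaConvex (S : Set (Measure X)) : Prop :=
  ∀ (w : ℕ → ℝ≥0∞) (μ : ℕ → Measure X), ∑' n, w n = 1 → (∀ n, μ n ∈ S) →
    Measure.sum (fun n => w n • μ n) ∈ S

lemma measureSum_eq_zero_add (μ : ℕ → Measure X) :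
    Measure.sum μ = μ 0 + Measure.sum fun n => μ (n + 1) := by
  ext s hs
  rw [Measure.add_apply, Measure.sum_apply _ hs, Measure.sum_apply _ hs,
    tsum_eq_zero_add' ENNReal.summable]

lemma smul_measureSum {ι : Type*} (c : ℝ≥0∞) (μ : ι → Measure X) :
    c • Measure.sum μ = Measure.sum fun i => c • μ i := by
  ext s hs
  simp only [Measure.smul_apply, Measure.sum_apply _ hs, smul_eq_mul, ENNReal.tsum_mul_left]

variable {S : Set (Measure X)} {w : ℕ → ℝ≥0∞} {μ : ℕ → Measure X}

namespace SigmaConvex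

lemma sum_range_mul_le (hS : SigmaConvex S) {G : Measure X → ℝ≥0∞} (hG : ConcaveOn ℝ≥0∞ S G)
    (N : ℕ) (hw : ∑' n, w n = 1) (hμ : ∀ n, μ n ∈ S) :
    ∑ n ∈ Finset.range N, w n * G (μ n) ≤ G (Measure.sum fun n => w n • μ n) := by
  induction N generalizing w μ with
  | zero => simp
  | succ N ih =>
    rw [tsum_eq_zero_add' ENNReal.summable] at hw
    rw [Finset.sum_range_succ', add_comm, measureSum_eq_zero_add]
    set c := ∑' n, w (n + 1)
    have hc : c ≠ ∞ := ne_top_of_le_ne_top ENNReal.one_ne_top (hw ▸ le_add_self)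
    obtain ⟨v, hv, hwv⟩ : ∃ v : ℕ → ℝ≥0∞, ∑' n, v n = 1 ∧ ∀ n, w (n + 1) = c * v n :=
      exists_tsum_eq_one_and_eq_tsum_mul hc
    have hμ_tail : ∀ n, μ (n + 1) ∈ S := fun n => hμ (n + 1)
    calc w 0 * G (μ 0) + ∑ n ∈ Finset.range N, w (n + 1) * G (μ (n + 1))
        = w 0 * G (μ 0) + c * ∑ n ∈ Finset.range N, v n * G (μ (n + 1)) := by
          simp only [hwv, Finset.mul_sum, mul_assoc]
      _ ≤ w 0 * G (μ 0) + c * G (Measure.sum fun n => v n • μ (n + 1)) := by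
          gcongr
          exact ih hv hμ_tail
      _ ≤ G (w 0 • μ 0 + c • Measure.sum fun n => v n • μ (n + 1)) :=
          hG.2 (hμ 0) (hS _ _ hv hμ_tail) zero_le zero_le hw
      _ = G (w 0 • μ 0 + Measure.sum fun n => w (n + 1) • μ (n + 1)) := by
          simp only [smul_measureSum, smul_smul, hwv]

theorem tsum_mul_le (hS : SigmaConvex S) {G : Measure X → ℝ≥0∞} (hG : ConcaveOn ℝ≥0∞ S G)
    (hw : ∑' n, w n = 1) (hμ : ∀ n, μ n ∈ S) :
    ∑' n, w n * G (μ n) ≤ G (Measure.sum fun n => w n • μ n) :=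
  ENNReal.tsum_le_of_sum_range_le fun N => hS.sum_range_mul_le hG N hw hμ

theorem tsum_mul_dimFLower_le (hS : SigmaConvex S) {F : Measure X → ℝ → ℝ≥0∞}
    (hF : ∀ ε : ℝ, 0 < ε → ConcaveOn ℝ≥0∞ S (F · ε)) (hw : ∑' n, w n = 1) (hμ : ∀ n, μ n ∈ S) :
    ∑' n, w n * dimFLower F (μ n) ≤ dimFLower F (Measure.sum fun n => w n • μ n) := by
  have hw_top : ∀ n, w n ≠ ∞ := fun n =>
    ne_top_of_le_ne_top ENNReal.one_ne_top (hw ▸ ENNReal.le_tsum n)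
  let L : ℝ → ℝ≥0∞ := fun ε => ENNReal.ofReal (Real.log (1 / ε))
  calc ∑' n, w n * dimFLower F (μ n)
      = ∑' n, liminf (fun ε => w n * (F (μ n) ε / L ε)) (𝓝[>] 0) :=
        tsum_congr fun n => (ENNReal.liminf_const_mul_of_ne_top (hw_top n)).symm
    _ ≤ liminf (fun ε => ∑' n, w n * (F (μ n) ε / L ε)) (𝓝[>] 0) :=
        tsum_liminf_le _
    _ ≤ dimFLower F (Measure.sum fun n => w n • μ n) := by
        refine liminf_le_liminf (eventually_mem_nhdsWithin.mono fun ε hε => ?_)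
        calc ∑' n, w n * (F (μ n) ε / L ε) = (∑' n, w n * F (μ n) ε) / L ε := by
              simp only [div_eq_mul_inv, ← mul_assoc, ENNReal.tsum_mul_right]
          _ ≤ F (Measure.sum fun n => w n • μ n) ε / L ε := by
              gcongr
              exact hS.tsum_mul_le (hF ε hε) hw hμ

end SigmaConvex

end SigmaConvex

section Invariant

variable {X : Type*} [MeasurableSpace X] (T : X → X)

/-- The set `M(X,T)` of `T`-invariant probability measures. -/
def invariantProbabilityMeasures : Set (Measure X) :=
  {μ | IsProbabilityMeasure μ ∧ MeasurePreserving T μ μ}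

lemma convex_invariantProbabilityMeasures : Convex ℝ≥0∞ (invariantProbabilityMeasures T) := by
  rintro μ ⟨hμ, hTμ⟩ ν ⟨hν, hTν⟩ a b - - hab
  exact ⟨⟨by simp [hab]⟩, (hTμ.smul_measure a).add_measure (hTν.smul_measure b)⟩

lemma sigmaConvex_invariantProbabilityMeasures :
    SigmaConvex (invariantProbabilityMeasures T) := by
  intro w μ hw hμ
  have hT : Measurable T := (hμ 0).2.measurable
  have hμ_univ : ∀ n, μ n univ = 1 := fun n => (hμ n).1.measure_univ
  refine ⟨⟨by simp [hμ_univ, hw]⟩, hT, ?_⟩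
  simp only [Measure.map_sum hT.aemeasurable, Measure.map_smul, (hμ _).2.map_eq]

end Invariant

end MMD

theorem stmt18_general {X : Type*} [MeasurableSpace X] {S : Set (Measure X)} (hS : SigmaConvex S)
    {F : Measure X → ℝ → ℝ≥0∞} (hF : ∀ ε : ℝ, 0 < ε → ConcaveOn ℝ≥0∞ S (F · ε))
    {μ : ℕ → Measure X} (hμ : ∀ n, μ n ∈ S)
    (hdim : ∀ n : ℕ, (2 : ℝ≥0∞) ^ (n + 1) ≤ dimFLower F (μ n)) :
    dimFLower F (Measure.sum fun n : ℕ => ((2 : ℝ≥0∞)⁻¹) ^ (n + 1) • μ n) = ∞ := by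
  have hw : ∑' n : ℕ, ((2 : ℝ≥0∞)⁻¹) ^ (n + 1) = 1 := by
    rw [ENNReal.tsum_geometric_add_one, ENNReal.one_sub_inv_two, inv_inv,
      ENNReal.inv_mul_cancel two_ne_zero ENNReal.ofNat_ne_top]
  refine top_le_iff.mp ?_
  calc ∞ = ∑' _ : ℕ, (1 : ℝ≥0∞) := (ENNReal.tsum_const_eq_top_of_ne_zero one_ne_zero).symm
    _ = ∑' n : ℕ, ((2 : ℝ≥0∞)⁻¹) ^ (n + 1) * 2 ^ (n + 1) := by
        simp only [← mul_pow, ENNReal.inv_mul_cancel two_ne_zero ENNReal.ofNat_ne_top, one_pow]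
    _ ≤ ∑' n : ℕ, ((2 : ℝ≥0∞)⁻¹) ^ (n + 1) * dimFLower F (μ n) := by
        gcongr with n
        exact hdim n
    _ ≤ _ := hS.tsum_mul_dimFLower_le hF hw hμ

/-- Proposition 3.7 (3), second half: if `F(·,ε)` is concave for every fixed `ε > 0` and
`mdim_M^-(T,X,d) = ∞`, then a maximal lower metric mean dimension measure exists; explicitly,
picking `μ_n` with lower dimension `> 2^n`, the measure `μ = Σ_{n≥1} 2^{-n} μ_n` has lower
dimension `∞`. -/
theorem stmt18 {X : Type*} [MetricSpace X] [CompactSpace X] [MeasurableSpace X] [BorelSpace X]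
    (T : X → X) (hT : Continuous T)
    (F : Measure X → ℝ → ℝ≥0∞) (hF : IsCandidate T F)
    (hlow : mdimMLower T =
      ⨆ (μ : Measure X) (_ : IsProbabilityMeasure μ) (_ : MeasurePreserving T μ μ),
        dimFLower F μ)
    (hconc : ∀ ε : ℝ, 0 < ε → ∀ μ₁ μ₂ : Measure X,
      IsProbabilityMeasure μ₁ → MeasurePreserving T μ₁ μ₁ →
      IsProbabilityMeasure μ₂ → MeasurePreserving T μ₂ μ₂ →
      ∀ p : ℝ, 0 ≤ p → p ≤ 1 →
        ENNReal.ofReal p * F μ₁ ε + ENNReal.ofReal (1 - p) * F μ₂ ε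
          ≤ F (ENNReal.ofReal p • μ₁ + ENNReal.ofReal (1 - p) • μ₂) ε)
    (hinf : mdimMLower T = ∞)
    (μn : ℕ → Measure X)
    (hμnp : ∀ n, IsProbabilityMeasure (μn n)) (hμninv : ∀ n, MeasurePreserving T (μn n) (μn n))
    (hμnbig : ∀ n : ℕ, (2 : ℝ≥0∞) ^ (n + 1) < dimFLower F (μn n))
    (μ : Measure X) (hμ : μ = Measure.sum (fun n : ℕ => ((2 : ℝ≥0∞)⁻¹) ^ (n + 1) • μn n)) :
    dimFLower F μ = ∞ ∧ mdimMLower T = dimFLower F μ := by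
  have hconc' : ∀ ε : ℝ, 0 < ε → ConcaveOn ℝ≥0∞ (invariantProbabilityMeasures T) (F · ε) :=
    fun ε hε => concaveOn_ennreal_of_ofReal (convex_invariantProbabilityMeasures T)
      fun μ₁ h₁ μ₂ h₂ => hconc ε hε μ₁ μ₂ h₁.1 h₁.2 h₂.1 h₂.2
  have htop : dimFLower F μ = ∞ := hμ ▸ stmt18_general
    (sigmaConvex_invariantProbabilityMeasures T) hconc' (fun n => ⟨hμnp n, hμninv n⟩)
    fun n => (hμnbig n).le
  exact ⟨htop, hinf.trans htop.symm⟩
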